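/- arXiv:2504.17932 — 2 statements merged into one kernel-verified Lean document; each statement's English description precedes it below -/
import Mathlib

section
/- Fix d ≥ 2, κ > 0, and initial data (t₀, x₀′, x_{d0}, τ₀, ξ₀′, ξ_{d0}) ∈ ℝ × ℝ^{d−1} × ℝ × ℝ × ℝ^{d−1} × ℝ with ξ₀′ ≠ 0. Set θ₀ := arctan(ξ_{d0}/|ξ₀′|) and I := { s ∈ ℝ : θ₀ − κ|ξ₀′|s ∈ (−π/2, π/2) }. Define on I: τ(s) = τ₀, t(s) = −2τ₀ s + t₀, ξ′(s) = ξ₀′, ξ_d(s) = |ξ₀′| tan(θ₀ − κ|ξ₀′| s), x_d(s) = x_{d0} [ (ξ_{d0}² + |ξ₀′|²)/(2|ξ₀′|²) + cos(2κ|ξ₀′|s) (|ξ₀′|² − ξ_{d0}²)/(2|ξ₀′|²) + sin(2κ|ξ₀′|s) ξ_{d0}/|ξ₀′| ], x′(s) = x₀′ + 2κ ξ₀′ x_{d0} [ s(ξ_{d0}² + |ξ₀′|²)/(2|ξ₀′|²) + (sin(2κ|ξ₀′|s)/(2κ|ξ₀′|))·(|ξ₀′|² − ξ_{d0}²)/(2|ξ₀′|²)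 + ((1 − cos(2κ|ξ₀′|s))/(2κ|ξ₀′|))·(ξ_{d0}/|ξ₀′|) ]. Then these curves take the prescribed initial values at s = 0 and solve the Hamiltonian bicharacteristic system on I: dt/ds = −2τ, dx_d/ds = 2κ x_d ξ_d, dx′/ds = 2κ x_d ξ′, dτ/ds = 0, dξ_d/ds = −κ(ξ_d² + |ξ′|²), dξ′/ds = 0. -/
open Real

noncomputable section

/-!
With `ξd0 = |ξ₀'| tan θ₀`, the bracket in the formula for `x_d` is
`cos² (θ₀ - κ |ξ₀'| s) / cos² θ₀`. Its logarithmic derivative is `2 κ |ξ₀'| tan (θ₀ - κ |ξ₀'| s)`,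
which is `2 κ ξ_d`, and `tan' = 1 + tan²` is the Riccati equation for `ξ_d`. The bracket in the
formula for `x'` is the antiderivative of the one for `x_d` that vanishes at `0`.
-/

/-- The normal frequency `ξ_d` along a bicharacteristic whose tangential frequency has norm `r`;
`θ₀` is the angle with `ξ_d = r tan θ₀` at parameter `0`. -/
def normalFrequency (κ r θ₀ s : ℝ) : ℝ := r * tan (θ₀ - κ * r * s)

/-- The ratio of the normal position `x_d` at parameter `s` to its initial value, along a
bicharacteristic whose tangential frequency has norm `r` and whose initial normal frequency
is `ξd0`. -/
def normalProfile (κ r ξd0 s : ℝ) : ℝ :=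
  (ξd0 ^ 2 + r ^ 2) / (2 * r ^ 2)
    + cos (2 * κ * r * s) * ((r ^ 2 - ξd0 ^ 2) / (2 * r ^ 2))
    + sin (2 * κ * r * s) * (ξd0 / r)

/-- The closed form of `∫₀ˢ normalProfile κ r ξd0`, to which the tangential displacement `x' - x₀'`
is proportional. -/
def normalProfilePrimitive (κ r ξd0 s : ℝ) : ℝ :=
  s * (ξd0 ^ 2 + r ^ 2) / (2 * r ^ 2)
    + (sin (2 * κ * r * s) / (2 * κ * r)) * ((r ^ 2 - ξd0 ^ 2) / (2 * r ^ 2))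
    + ((1 - cos (2 * κ * r * s)) / (2 * κ * r)) * (ξd0 / r)

theorem cos_sub_sq_div_cos_sq {θ : ℝ} (hθ : cos θ ≠ 0) (φ : ℝ) :
    cos (θ - φ) ^ 2 / cos θ ^ 2 =
      (tan θ ^ 2 + 1) / 2 + cos (2 * φ) * ((1 - tan θ ^ 2) / 2) + sin (2 * φ) * tan θ := by
  have cos_sub_div : cos (θ - φ) / cos θ = cos φ + tan θ * sin φ := by
    rw [cos_sub, tan_eq_sin_div_cos]
    field_simp
  rw [← div_pow, cos_sub_div, cos_two_mul', sin_two_mul]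
  linear_combination ((tan θ ^ 2 + 1) / 2) * sin_sq_add_cos_sq φ

section Profiles

variable {κ r θ₀ s : ℝ}

theorem hasDerivAt_normalFrequency (hs : cos (θ₀ - κ * r * s) ≠ 0) :
    HasDerivAt (normalFrequency κ r θ₀) (-κ * (normalFrequency κ r θ₀ s ^ 2 + r ^ 2)) s := by
  have hphase := (hasDerivAt_const_mul (x := s) (κ * r)).const_sub θ₀
  refine (((hasDerivAt_tan hs).comp s hphase).const_mul r).congr_deriv ?_
  rw [normalFrequency, one_div, ← inv_one_add_tan_sq hs, inv_inv]
  ring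

theorem normalProfile_mul_tan (hr : r ≠ 0) (hθ₀ : cos θ₀ ≠ 0) (κ s : ℝ) :
    normalProfile κ r (r * tan θ₀) s = cos (θ₀ - κ * r * s) ^ 2 / cos θ₀ ^ 2 := by
  rw [cos_sub_sq_div_cos_sq hθ₀, normalProfile]
  field_simp

theorem hasDerivAt_normalProfile (hr : r ≠ 0) (hθ₀ : cos θ₀ ≠ 0)
    (hs : cos (θ₀ - κ * r * s) ≠ 0) :
    HasDerivAt (normalProfile κ r (r * tan θ₀))
      (2 * κ * normalProfile κ r (r * tan θ₀) s * normalFrequency κ r θ₀ s) s := by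
  have hphase := (hasDerivAt_const_mul (x := s) (κ * r)).const_sub θ₀
  rw [funext (normalProfile_mul_tan hr hθ₀ κ)]
  refine ((hphase.cos.pow 2).div_const (cos θ₀ ^ 2)).congr_deriv ?_
  rw [normalFrequency, ← tan_mul_cos hs]
  ring

theorem hasDerivAt_normalProfilePrimitive (hκ : κ ≠ 0) (hr : r ≠ 0) (ξd0 s : ℝ) :
    HasDerivAt (normalProfilePrimitive κ r ξd0) (normalProfile κ r ξd0 s) s := by
  have hphase : HasDerivAt (fun s => 2 * κ * r * s) (2 * κ * r) s := hasDerivAt_const_mul _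
  have hconst := ((hasDerivAt_id s).mul_const (ξd0 ^ 2 + r ^ 2)).div_const (2 * r ^ 2)
  have hsin := (hphase.sin.div_const (2 * κ * r)).mul_const ((r ^ 2 - ξd0 ^ 2) / (2 * r ^ 2))
  have hcos := ((hphase.cos.const_sub 1).div_const (2 * κ * r)).mul_const (ξd0 / r)
  refine ((hconst.add hsin).add hcos).congr_deriv ?_
  rw [normalProfile]
  field_simp

theorem normalProfile_zero (hr : r ≠ 0) (κ ξd0 : ℝ) : normalProfile κ r ξd0 0 = 1 := by
  simp only [normalProfile, mul_zero, cos_zero, sin_zero]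
  field_simp
  ring

theorem normalProfilePrimitive_zero (κ r ξd0 : ℝ) : normalProfilePrimitive κ r ξd0 0 = 0 := by
  simp [normalProfilePrimitive]

end Profiles

theorem stmt3_general {E : Type*} [NormedAddCommGroup E] [NormedSpace ℝ E]
    {κ : ℝ} (hκ : κ ≠ 0) (t₀ : ℝ) (x₀' : E) (xd0 τ₀ : ℝ) {ξ₀' : E} (ξd0 : ℝ) (hξ : ξ₀' ≠ 0)
    {θ₀ : ℝ} (hθ : θ₀ = arctan (ξd0 / ‖ξ₀'‖))
    {τ t ξd xd : ℝ → ℝ} {ξ' x' : ℝ → E}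
    (hτ : ∀ s, τ s = τ₀)
    (ht : ∀ s, t s = -2 * τ₀ * s + t₀)
    (hξ' : ∀ s, ξ' s = ξ₀')
    (hξd : ∀ s, ξd s = normalFrequency κ ‖ξ₀'‖ θ₀ s)
    (hxd : ∀ s, xd s = xd0 * normalProfile κ ‖ξ₀'‖ ξd0 s)
    (hx' : ∀ s, x' s = x₀' + (2 * κ * xd0 * normalProfilePrimitive κ ‖ξ₀'‖ ξd0 s) • ξ₀') :
    (t 0 = t₀ ∧ xd 0 = xd0 ∧ x' 0 = x₀' ∧ τ 0 = τ₀ ∧ ξd 0 = ξd0 ∧ ξ' 0 = ξ₀') ∧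
    ∀ s, cos (θ₀ - κ * ‖ξ₀'‖ * s) ≠ 0 →
      HasDerivAt t (-2 * τ s) s ∧
      HasDerivAt xd (2 * κ * xd s * ξd s) s ∧
      HasDerivAt x' ((2 * κ * xd s) • ξ' s) s ∧
      HasDerivAt τ 0 s ∧
      HasDerivAt ξd (-κ * ((ξd s) ^ 2 + ‖ξ' s‖ ^ 2)) s ∧
      HasDerivAt ξ' 0 s := by
  obtain rfl := funext hτ
  obtain rfl := funext ht
  obtain rfl := funext hξ'
  obtain rfl := funext hξd
  obtain rfl := funext hxd
  obtain rfl := funext hx'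
  have hr : ‖ξ₀'‖ ≠ 0 := norm_ne_zero_iff.mpr hξ
  have hθ₀ : cos θ₀ ≠ 0 := hθ ▸ (cos_arctan_pos _).ne'
  obtain rfl : ξd0 = ‖ξ₀'‖ * tan θ₀ := by rw [hθ, tan_arctan, mul_div_cancel₀ _ hr]
  refine ⟨⟨by simp, by simp [normalProfile_zero hr], by simp [normalProfilePrimitive_zero], rfl,
    by simp [normalFrequency], rfl⟩, fun s hs => ⟨?_, ?_, ?_, hasDerivAt_const _ _,
    hasDerivAt_normalFrequency hs, hasDerivAt_const _ _⟩⟩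
  · exact (hasDerivAt_const_mul _).add_const t₀
  · exact ((hasDerivAt_normalProfile hr hθ₀ hs).const_mul xd0).congr_deriv (by ring)
  · refine ((((hasDerivAt_normalProfilePrimitive hκ hr _ s).const_mul
      (2 * κ * xd0)).smul_const ξ₀').const_add x₀').congr_deriv ?_
    rw [mul_assoc (2 * κ)]

/-- explicit bicharacteristics of the Hamiltonian
`H = κ x_d ξ_d² + κ x_d |ξ′|² − τ²` with nonzero tangential frequency. -/
theorem stmt3 {d : ℕ} (hd : 2 ≤ d) (κ : ℝ) (hκ : 0 < κ)
    (t₀ : ℝ) (x₀' : EuclideanSpace ℝ (Fin (d - 1))) (xd0 τ₀ : ℝ)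
    (ξ₀' : EuclideanSpace ℝ (Fin (d - 1))) (ξd0 : ℝ) (hξ : ξ₀' ≠ 0)
    (θ₀ : ℝ) (hθ : θ₀ = Real.arctan (ξd0 / ‖ξ₀'‖))
    (I : Set ℝ)
    (hI : I = {s : ℝ | θ₀ - κ * ‖ξ₀'‖ * s ∈ Set.Ioo (-(π / 2)) (π / 2)})
    (τ t ξd xd : ℝ → ℝ) (ξ' x' : ℝ → EuclideanSpace ℝ (Fin (d - 1)))
    (hτ : ∀ s, τ s = τ₀)
    (ht : ∀ s, t s = -2 * τ₀ * s + t₀)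
    (hξ' : ∀ s, ξ' s = ξ₀')
    (hξd : ∀ s, ξd s = ‖ξ₀'‖ * Real.tan (θ₀ - κ * ‖ξ₀'‖ * s))
    (hxd : ∀ s, xd s = xd0 *
      ((ξd0 ^ 2 + ‖ξ₀'‖ ^ 2) / (2 * ‖ξ₀'‖ ^ 2)
        + Real.cos (2 * κ * ‖ξ₀'‖ * s) * ((‖ξ₀'‖ ^ 2 - ξd0 ^ 2) / (2 * ‖ξ₀'‖ ^ 2))
        + Real.sin (2 * κ * ‖ξ₀'‖ * s) * (ξd0 / ‖ξ₀'‖)))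
    (hx' : ∀ s, x' s = x₀' +
      (2 * κ * xd0 *
        (s * (ξd0 ^ 2 + ‖ξ₀'‖ ^ 2) / (2 * ‖ξ₀'‖ ^ 2)
          + (Real.sin (2 * κ * ‖ξ₀'‖ * s) / (2 * κ * ‖ξ₀'‖))
              * ((‖ξ₀'‖ ^ 2 - ξd0 ^ 2) / (2 * ‖ξ₀'‖ ^ 2))
          + ((1 - Real.cos (2 * κ * ‖ξ₀'‖ * s)) / (2 * κ * ‖ξ₀'‖))
              * (ξd0 / ‖ξ₀'‖))) • ξ₀') :
    (t 0 = t₀ ∧ xd 0 = xd0 ∧ x' 0 = x₀' ∧ τ 0 = τ₀ ∧ ξd 0 = ξd0 ∧ ξ' 0 = ξ₀') ∧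
    ∀ s ∈ I,
      HasDerivAt t (-2 * τ s) s ∧
      HasDerivAt xd (2 * κ * xd s * ξd s) s ∧
      HasDerivAt x' ((2 * κ * xd s) • ξ' s) s ∧
      HasDerivAt τ 0 s ∧
      HasDerivAt ξd (-κ * ((ξd s) ^ 2 + ‖ξ' s‖ ^ 2)) s ∧
      HasDerivAt ξ' 0 s := by
  obtain ⟨initial, solves⟩ := stmt3_general hκ.ne' t₀ x₀' xd0 τ₀ ξd0 hξ hθ hτ ht hξ' hξd hxd hx'
  exact ⟨initial, fun s hs => solves s (cos_pos_of_mem_Ioo (hI.subset hs)).ne'⟩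

end
end

section
/- Fix d ≥ 2, κ > 0, x_{d0} > 0, ξ₀′ ∈ ℝ^{d−1} with ξ₀′ ≠ 0, ξ_{d0} ∈ ℝ, τ₀ ∈ ℝ, x₀′ ∈ ℝ^{d−1}, t₀ ∈ ℝ. Set θ₀ := arctan(ξ_{d0}/|ξ₀′|), and define for all s ∈ ℝ: t(s) = −2τ₀ s + t₀, x_d(s) = x_{d0} [ (ξ_{d0}² + |ξ₀′|²)/(2|ξ₀′|²) + cos(2κ|ξ₀′|s)(|ξ₀′|² − ξ_{d0}²)/(2|ξ₀′|²) + sin(2κ|ξ₀′|s) ξ_{d0}/|ξ₀′| ], x′(s) = x₀′ + 2κ ξ₀′ x_{d0} [ s(ξ_{d0}² + |ξ₀′|²)/(2|ξ₀′|²) + (sin(2κ|ξ₀′|s)/(2κ|ξ₀′|))·(|ξ₀′|² − ξ_{d0}²)/(2|ξ₀′|²) + ((1−cos(2κ|ξ₀′|s))/(2κ|ξ₀′|))·(ξ_{d0}/|ξ₀′|) ]. Then: (i) x_d(s) = 0 if and only if s = s_k := (θ₀ − (2k+1)π/2)/(κ|ξ₀′|) for some k ∈ ℤ; (ii) for every k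 ∈ ℤ, s_k − s_{k+1} = π/(κ|ξ₀′|) and t(s_{k+1}) − t(s_k) = 2πτ₀/(κ|ξ₀′|); (iii) for every k ∈ ℤ, x′(s_{k+1}) − x′(s_k) = −π x_{d0} (ξ₀′/|ξ₀′|)(|ξ₀′|² + ξ_{d0}²)/|ξ₀′|². -/
open Real

noncomputable section

/-!
Put `φ = κ|ξ₀'|s` and `p = ξ_{d0}/|ξ₀'| = tan θ₀`. The double-angle formulas turn the bracket in
`x_d(s)` into the perfect square `(cos φ + p sin φ)² = (cos (φ - θ₀) / cos θ₀)²`, so the collisions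
are the zeros of `cos (φ - θ₀)`. Consecutive zeros differ by `π` in `φ`, a full period of the
trigonometric terms of `x'(s)`, so only its term linear in `s` contributes to the displacement.
-/

/-- The physical time `t(s)` along a bicharacteristic. -/
def physicalTime (τ₀ t₀ s : ℝ) : ℝ :=
  -2 * τ₀ * s + t₀

/-- The normal coordinate `x_d(s)` of a bicharacteristic. Here `r` stands for the length `|ξ₀'|` of
the tangential frequency and `η` for the normal frequency `ξ_{d0}`. -/
def normalCoord (κ xd0 r η s : ℝ) : ℝ :=
  xd0 * ((η ^ 2 + r ^ 2) / (2 * r ^ 2)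
    + cos (2 * κ * r * s) * ((r ^ 2 - η ^ 2) / (2 * r ^ 2))
    + sin (2 * κ * r * s) * (η / r))

/-- The scalar coefficient of `ξ₀'` in the tangential displacement `x'(s) - x₀'`, with `r = |ξ₀'|`
and `η = ξ_{d0}`. -/
def tangentialCoeff (κ xd0 r η s : ℝ) : ℝ :=
  2 * κ * xd0 * (s * (η ^ 2 + r ^ 2) / (2 * r ^ 2)
    + (sin (2 * κ * r * s) / (2 * κ * r)) * ((r ^ 2 - η ^ 2) / (2 * r ^ 2))
    + ((1 - cos (2 * κ * r * s)) / (2 * κ * r)) * (η / r))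

/-- The parameter `s_k` of the `k`-th collision with the boundary `{x_d = 0}`, with `r = |ξ₀'|` and
`η = ξ_{d0}`, so that `arctan (η / r)` is `θ₀`. It decreases in `k` when `κ r > 0`. -/
def collisionParam (κ r η : ℝ) (k : ℤ) : ℝ :=
  (arctan (η / r) - (2 * (k : ℝ) + 1) * π / 2) / (κ * r)

lemma cos_add_mul_sin_sq (p φ : ℝ) :
    (cos φ + p * sin φ) ^ 2
      = (p ^ 2 + 1) / 2 + cos (2 * φ) * ((1 - p ^ 2) / 2) + sin (2 * φ) * p := by
  rw [cos_two_mul, sin_two_mul]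
  linear_combination p ^ 2 * sin_sq_add_cos_sq φ

lemma cos_sub_arctan (p φ : ℝ) :
    cos (φ - arctan p) = cos (arctan p) * (cos φ + p * sin φ) := by
  have sin_arctan_eq : sin (arctan p) = p * cos (arctan p) := by
    rw [← tan_mul_cos (cos_arctan_pos p).ne', tan_arctan]
  rw [cos_sub, sin_arctan_eq]
  ring

lemma cos_eq_zero_iff_neg {θ : ℝ} : cos θ = 0 ↔ ∃ k : ℤ, θ = -((2 * k + 1) * π / 2) := by
  rw [← cos_neg, cos_eq_zero_iff]
  simp only [neg_eq_iff_eq_neg]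

lemma cos_add_mul_sin_eq_zero_iff (p φ : ℝ) :
    cos φ + p * sin φ = 0 ↔ ∃ k : ℤ, φ = arctan p - (2 * k + 1) * π / 2 := by
  calc cos φ + p * sin φ = 0
      ↔ cos (φ - arctan p) = 0 := by
        rw [cos_sub_arctan, mul_eq_zero, or_iff_right (cos_arctan_pos p).ne']
    _ ↔ ∃ k : ℤ, φ - arctan p = -((2 * k + 1) * π / 2) := cos_eq_zero_iff_neg
    _ ↔ ∃ k : ℤ, φ = arctan p - (2 * k + 1) * π / 2 := by
        simp only [sub_eq_iff_eq_add, neg_add_eq_sub]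

lemma physicalTime_sub (τ₀ t₀ s s' : ℝ) :
    physicalTime τ₀ t₀ s' - physicalTime τ₀ t₀ s = 2 * τ₀ * (s - s') := by
  unfold physicalTime
  ring

lemma normalCoord_eq_mul_sq {r : ℝ} (hr : r ≠ 0) (κ xd0 η s : ℝ) :
    normalCoord κ xd0 r η s = xd0 * (cos (κ * r * s) + η / r * sin (κ * r * s)) ^ 2 := by
  have double_angle : 2 * κ * r * s = 2 * (κ * r * s) := by ring
  rw [normalCoord, cos_add_mul_sin_sq, double_angle]
  field_simp

lemma normalCoord_eq_zero_iff {κ xd0 r : ℝ} (hκ : κ ≠ 0) (hxd0 : xd0 ≠ 0) (hr : r ≠ 0) (η s : ℝ) :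
    normalCoord κ xd0 r η s = 0 ↔ ∃ k : ℤ, s = collisionParam κ r η k := by
  rw [normalCoord_eq_mul_sq hr, mul_eq_zero, or_iff_right hxd0, sq_eq_zero_iff,
    cos_add_mul_sin_eq_zero_iff]
  simp only [collisionParam, eq_div_iff (mul_ne_zero hκ hr), mul_comm s]

lemma collisionParam_sub_succ (κ r η : ℝ) (k : ℤ) :
    collisionParam κ r η k - collisionParam κ r η (k + 1) = π / (κ * r) := by
  unfold collisionParam
  push_cast
  ring

lemma tangentialCoeff_sub_period {κ r : ℝ} (hκ : κ ≠ 0) (hr : r ≠ 0) (xd0 η s : ℝ) :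
    tangentialCoeff κ xd0 r η (s - π / (κ * r)) - tangentialCoeff κ xd0 r η s
      = -(π * xd0 * (r ^ 2 + η ^ 2)) / r ^ 3 := by
  have phase_shift : 2 * κ * r * (s - π / (κ * r)) = 2 * κ * r * s - 2 * π := by
    field_simp
  rw [tangentialCoeff, tangentialCoeff, phase_shift, sin_sub_two_pi, cos_sub_two_pi]
  field_simp
  ring

lemma tangentialCoeff_collisionParam_succ_sub {κ r : ℝ} (hκ : κ ≠ 0) (hr : r ≠ 0)
    (xd0 η : ℝ) (k : ℤ) :
    tangentialCoeff κ xd0 r η (collisionParam κ r η (k + 1))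
        - tangentialCoeff κ xd0 r η (collisionParam κ r η k)
      = -(π * xd0 * (r ^ 2 + η ^ 2)) / r ^ 3 := by
  rw [← tangentialCoeff_sub_period hκ hr xd0 η (collisionParam κ r η k),
    ← collisionParam_sub_succ κ r η k, sub_sub_cancel]

theorem stmt5_general {E : Type*} [NormedAddCommGroup E] [NormedSpace ℝ E]
    {κ xd0 : ℝ} (hκ : κ ≠ 0) (hxd0 : xd0 ≠ 0) {ξ : E} (hξ : ξ ≠ 0) (η τ₀ t₀ : ℝ) (x₀ : E) :
    (∀ s : ℝ, normalCoord κ xd0 ‖ξ‖ η s = 0 ↔ ∃ k : ℤ, s = collisionParam κ ‖ξ‖ η k) ∧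
    (∀ k : ℤ, collisionParam κ ‖ξ‖ η k - collisionParam κ ‖ξ‖ η (k + 1) = π / (κ * ‖ξ‖) ∧
      physicalTime τ₀ t₀ (collisionParam κ ‖ξ‖ η (k + 1))
          - physicalTime τ₀ t₀ (collisionParam κ ‖ξ‖ η k)
        = 2 * π * τ₀ / (κ * ‖ξ‖)) ∧
    (∀ k : ℤ, (x₀ + tangentialCoeff κ xd0 ‖ξ‖ η (collisionParam κ ‖ξ‖ η (k + 1)) • ξ)
        - (x₀ + tangentialCoeff κ xd0 ‖ξ‖ η (collisionParam κ ‖ξ‖ η k) • ξ)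
      = (-(π * xd0 * (‖ξ‖ ^ 2 + η ^ 2)) / ‖ξ‖ ^ 3) • ξ) := by
  have hr : ‖ξ‖ ≠ 0 := norm_ne_zero_iff.mpr hξ
  refine ⟨normalCoord_eq_zero_iff hκ hxd0 hr η,
    fun k ↦ ⟨collisionParam_sub_succ κ ‖ξ‖ η k, ?_⟩, fun k ↦ ?_⟩
  · rw [physicalTime_sub, collisionParam_sub_succ]
    ring
  · rw [add_sub_add_left_eq_sub, ← sub_smul, tangentialCoeff_collisionParam_succ_sub hκ hr]

/-- collision times of the projected bicharacteristics with the
boundary `{x_d = 0}`, their equal spacing, and the tangential displacement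
between consecutive reflections. -/
theorem stmt5 {d : ℕ} (hd : 2 ≤ d) (κ : ℝ) (hκ : 0 < κ)
    (xd0 : ℝ) (hxd0 : 0 < xd0)
    (ξ₀' : EuclideanSpace ℝ (Fin (d - 1))) (hξ : ξ₀' ≠ 0) (ξd0 τ₀ : ℝ)
    (x₀' : EuclideanSpace ℝ (Fin (d - 1))) (t₀ : ℝ)
    (θ₀ : ℝ) (hθ : θ₀ = Real.arctan (ξd0 / ‖ξ₀'‖))
    (t xd : ℝ → ℝ) (x' : ℝ → EuclideanSpace ℝ (Fin (d - 1)))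
    (ht : ∀ s, t s = -2 * τ₀ * s + t₀)
    (hxd : ∀ s, xd s = xd0 *
      ((ξd0 ^ 2 + ‖ξ₀'‖ ^ 2) / (2 * ‖ξ₀'‖ ^ 2)
        + Real.cos (2 * κ * ‖ξ₀'‖ * s) * ((‖ξ₀'‖ ^ 2 - ξd0 ^ 2) / (2 * ‖ξ₀'‖ ^ 2))
        + Real.sin (2 * κ * ‖ξ₀'‖ * s) * (ξd0 / ‖ξ₀'‖)))
    (hx' : ∀ s, x' s = x₀' +
      (2 * κ * xd0 *
        (s * (ξd0 ^ 2 + ‖ξ₀'‖ ^ 2) / (2 * ‖ξ₀'‖ ^ 2)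
          + (Real.sin (2 * κ * ‖ξ₀'‖ * s) / (2 * κ * ‖ξ₀'‖))
              * ((‖ξ₀'‖ ^ 2 - ξd0 ^ 2) / (2 * ‖ξ₀'‖ ^ 2))
          + ((1 - Real.cos (2 * κ * ‖ξ₀'‖ * s)) / (2 * κ * ‖ξ₀'‖))
              * (ξd0 / ‖ξ₀'‖))) • ξ₀')
    (sk : ℤ → ℝ)
    (hsk : ∀ k : ℤ, sk k = (θ₀ - (2 * (k : ℝ) + 1) * π / 2) / (κ * ‖ξ₀'‖)) :
    (∀ s : ℝ, xd s = 0 ↔ ∃ k : ℤ, s = sk k) ∧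
    (∀ k : ℤ, sk k - sk (k + 1) = π / (κ * ‖ξ₀'‖) ∧
      t (sk (k + 1)) - t (sk k) = 2 * π * τ₀ / (κ * ‖ξ₀'‖)) ∧
    (∀ k : ℤ, x' (sk (k + 1)) - x' (sk k)
      = (-(π * xd0 * (‖ξ₀'‖ ^ 2 + ξd0 ^ 2)) / ‖ξ₀'‖ ^ 3) • ξ₀') := by
  rw [hθ] at hsk
  rw [funext ht, funext hxd, funext hx', funext hsk]
  exact stmt5_general hκ.ne' hxd0.ne' hξ ξd0 τ₀ t₀ x₀'

end
end
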